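/- Let n ≥ 2, let l₁, …, lₙ > 0 with lₙ > max_{1≤i≤n−1} l_i, and let ϱ > 0. For a tuple m = (m₁, …, m_{n−1}) of nonnegative integers with Σ_{i=1}^{n−1} m_i ≥ 1, set β(m) = (Σ_{i=1}^{n−1} (m_iπ/l_i)²)^{1/2}. For τ > 0 let A^f(τ) be the number of such tuples m satisfying (2β(m)³/ϱ³)·[((sinh(β(m)lₙ))(cosh(β(m)lₙ)) + β(m)lₙ)/(sinh²(β(m)lₙ) − β(m)²lₙ²)] ≤ τ³. Then A^f(τ)/τ^{n−1} → ω_{n−1}·(16^{1/3}·π)^{−(n−1)}·l₁⋯l_{n−1}·ϱ^{n−1} as τ → +∞. -/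

import Mathlib

open Filter

/-- `beta l m = (∑ᵢ (mᵢ π / lᵢ)²)^{1/2}` for a tuple `m` of integers. -/
noncomputable def beta {k : ℕ} (l : Fin (k + 1) → ℝ) (m : Fin k → ℕ) : ℝ :=
  Real.sqrt (∑ i : Fin k, ((m i : ℝ) * Real.pi / l i.castSucc) ^ 2)

/-- The cube of the biharmonic Steklov eigenvalue of the box associated with the
frequency `b`, height `L` and density `ϱ`:
`(2b³/ϱ³)·(sinh(bL)cosh(bL) + bL)/(sinh²(bL) − b²L²)`. -/
noncomputable def steklovCubed (b L ϱ : ℝ) : ℝ :=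
  (2 * b ^ 3 / ϱ ^ 3) *
    ((Real.sinh (b * L) * Real.cosh (b * L) + b * L) /
      (Real.sinh (b * L) ^ 2 - b ^ 2 * L ^ 2))

/-!
As `x → ∞` the hyperbolic factor `(sinh x cosh x + x) / (sinh² x - x²)` tends to `1`, so the cube of
the eigenvalue is asymptotic to `2 β³ / ϱ³`, and the eigenvalue itself to `β / r` with
`r = ϱ / 2^{1/3} = 2 ϱ / 16^{1/3}`. A counting function of order `xᵏ` is multiplied by `rᵏ` when the
counted sequence is replaced by one asymptotic to its quotient by `r`, and finitely many exceptional
tuples do not matter. It remains to count the `m` with `β(m) ≤ x`: these are the integer points in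
the nonnegative orthant of a dilated ellipsoid, and the orthant carries the fraction `2⁻ᵏ` of the
volume because the ellipsoid is invariant under all sign changes of coordinates.
-/

open MeasureTheory Set
open scoped Pointwise Topology

section CountingFunctions

variable {α : Type*}

lemma finite_setOf_le_of_tendsto_cofinite_atTop {f : α → ℝ} (hf : Tendsto f cofinite atTop)
    (x : ℝ) : {a | f a ≤ x}.Finite := by
  simpa only [eventually_cofinite, not_lt] using hf.eventually_gt_atTop x

lemma exists_ncard_le_ncard_add_of_eventually_cofinite {A B : ℝ → Set α}
    (hB : ∀ τ, (B τ).Finite) (hAB : ∀ᶠ a in cofinite, ∀ τ, 0 ≤ τ → a ∈ A τ → a ∈ B τ) :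
    ∃ C : ℝ, ∀ τ, 0 ≤ τ → ((A τ).ncard : ℝ) ≤ (B τ).ncard + C := by
  set E := {a | ¬ ∀ τ, 0 ≤ τ → a ∈ A τ → a ∈ B τ}
  have hE : E.Finite := eventually_cofinite.1 hAB
  refine ⟨E.ncard, fun τ hτ => ?_⟩
  have hsub : A τ ⊆ B τ ∪ E := fun a ha =>
    or_iff_not_imp_right.2 fun haE => not_not.1 haE τ hτ ha
  exact_mod_cast (ncard_le_ncard hsub ((hB τ).union hE)).trans (ncard_union_le _ _)

lemma tendsto_comp_const_mul_div_pow {N : ℝ → ℝ} {k : ℕ} {V d : ℝ} (hd : 0 < d)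
    (hN : Tendsto (fun x => N x / x ^ k) atTop (𝓝 V)) :
    Tendsto (fun τ => N (d * τ) / τ ^ k) atTop (𝓝 (V * d ^ k)) := by
  refine ((hN.comp (tendsto_id.const_mul_atTop hd)).mul_const (d ^ k)).congr fun τ => ?_
  simp only [Function.comp, id, mul_pow]
  field_simp

lemma tendsto_div_pow_of_forall_le_comp_const_mul_add {N A : ℝ → ℝ} {k : ℕ} {V r : ℝ}
    (hk : k ≠ 0) (hr : 0 < r) (hN : Tendsto (fun x => N x / x ^ k) atTop (𝓝 V))
    (hupper : ∀ d, r < d → ∃ C, ∀ τ, 0 ≤ τ → A τ ≤ N (d * τ) + C)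
    (hlower : ∀ d, 0 < d → d < r → ∃ C, ∀ τ, 0 ≤ τ → N (d * τ) ≤ A τ + C) :
    Tendsto (fun τ => A τ / τ ^ k) atTop (𝓝 (V * r ^ k)) := by
  have hconst (C : ℝ) : Tendsto (fun τ : ℝ => C / τ ^ k) atTop (𝓝 0) :=
    tendsto_const_nhds.div_atTop (tendsto_pow_atTop hk)
  have hcont : Tendsto (fun d : ℝ => V * d ^ k) (𝓝 r) (𝓝 (V * r ^ k)) :=
    Continuous.tendsto (by fun_prop) r
  refine tendsto_order.2 ⟨fun u hu => ?_, fun u hu => ?_⟩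
  · obtain ⟨d, hud, hd, hdr⟩ := (((hcont.mono_left nhdsWithin_le_nhds).eventually_const_lt hu).and
      (Ioo_mem_nhdsLT hr)).exists
    obtain ⟨C, hC⟩ := hlower d hd hdr
    have hlim := (tendsto_comp_const_mul_div_pow hd hN).sub (hconst C)
    rw [sub_zero] at hlim
    filter_upwards [hlim.eventually_const_lt hud, eventually_ge_atTop 0] with τ hτ hτ0
    refine hτ.trans_le ?_
    rw [← sub_div]
    gcongr
    linarith only [hC τ hτ0]
  · obtain ⟨d, hdu, hrd⟩ := (((hcont.mono_left nhdsWithin_le_nhds).eventually_lt_const hu).and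
      (self_mem_nhdsWithin (s := Ioi r))).exists
    obtain ⟨C, hC⟩ := hupper d hrd
    have hlim := (tendsto_comp_const_mul_div_pow (hr.trans hrd) hN).add (hconst C)
    rw [add_zero] at hlim
    filter_upwards [hlim.eventually_lt_const hdu, eventually_ge_atTop 0] with τ hτ hτ0
    refine hτ.trans_le' ?_
    rw [← add_div]
    gcongr
    exact hC τ hτ0

lemma tendsto_ncard_le_pow_div_pow_of_tendsto_div_pow {β μ : α → ℝ} {P : α → Prop}
    {k p : ℕ} {V r : ℝ} (hk : k ≠ 0) (hp : p ≠ 0) (hr : 0 < r)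
    (hP : ∀ᶠ a in cofinite, P a) (hβ : Tendsto β cofinite atTop)
    (hN : Tendsto (fun x => ({a | β a ≤ x}.ncard : ℝ) / x ^ k) atTop (𝓝 V))
    (hμ : Tendsto (fun a => μ a / β a ^ p) cofinite (𝓝 (r ^ p)⁻¹)) :
    Tendsto (fun τ => ({a | P a ∧ μ a ≤ τ ^ p}.ncard : ℝ) / τ ^ k) atTop (𝓝 (V * r ^ k)) := by
  have hβpos := hβ.eventually_gt_atTop 0
  have hμ_atTop : Tendsto μ cofinite atTop := by
    refine (((tendsto_pow_atTop hp).comp hβ).atTop_mul_pos (by positivity) hμ).congr' ?_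
    filter_upwards [hβpos] with a ha
    exact mul_div_cancel₀ _ (pow_pos ha p).ne'
  refine tendsto_div_pow_of_forall_le_comp_const_mul_add hk hr hN (fun d hd => ?_)
    fun d hd hdr => ?_
  · refine exists_ncard_le_ncard_add_of_eventually_cofinite
      (fun τ => finite_setOf_le_of_tendsto_cofinite_atTop hβ _) ?_
    have hlt : (d ^ p)⁻¹ < (r ^ p)⁻¹ := by gcongr
    filter_upwards [hβpos, hμ.eventually_const_lt hlt] with a ha hμa τ hτ ⟨_, hle⟩
    have hd0 := hr.trans hd
    refine le_of_pow_le_pow_left₀ hp (by positivity) ?_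
    rw [lt_div_iff₀ (by positivity), inv_mul_lt_iff₀ (by positivity)] at hμa
    calc β a ^ p ≤ d ^ p * μ a := hμa.le
      _ ≤ d ^ p * τ ^ p := by gcongr
      _ = (d * τ) ^ p := (mul_pow d τ p).symm
  · refine exists_ncard_le_ncard_add_of_eventually_cofinite (fun τ =>
      (finite_setOf_le_of_tendsto_cofinite_atTop hμ_atTop _).subset fun a ha => ha.2) ?_
    have hlt : (r ^ p)⁻¹ < (d ^ p)⁻¹ := by gcongr
    filter_upwards [hβpos, hμ.eventually_lt_const hlt, hP]
      with a ha hμa hPa τ hτ hle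
    refine ⟨hPa, ?_⟩
    rw [div_lt_iff₀ (by positivity)] at hμa
    calc μ a ≤ (d ^ p)⁻¹ * β a ^ p := hμa.le
      _ ≤ (d ^ p)⁻¹ * (d * τ) ^ p := by gcongr
      _ = τ ^ p := by rw [mul_pow, inv_mul_cancel_left₀ (pow_pos hd p).ne']

end CountingFunctions

section Orthant

variable {ι : Type*} [Fintype ι]

lemma map_abs_volume_real :
    (volume : Measure ℝ).map (|·|) = (2 : NNReal) • volume.restrict (Ici 0) := by
  ext s hs
  rw [Measure.map_apply (by fun_prop) hs, Measure.smul_apply, Measure.restrict_apply hs,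
    ENNReal.smul_def, ← measure_inter_add_sdiff _ (measurableSet_Ici (a := (0 : ℝ))), smul_eq_mul,
    ENNReal.coe_ofNat, two_mul]
  congr 1
  · congr 1
    ext x
    simp +contextual [abs_of_nonneg]
  · have hneg : (fun x : ℝ => |x|) ⁻¹' s \ Ici 0 = -(s ∩ Ioi 0) := by
      ext x
      simp +contextual [and_congr_left_iff, abs_of_neg]
    rw [hneg, Measure.measure_neg]
    exact measure_congr ((ae_eq_refl s).inter Ioi_ae_eq_Ici)

lemma map_abs_volume_pi : (volume : Measure (ι → ℝ)).map (|·|) =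
    (2 : NNReal) ^ Fintype.card ι • volume.restrict (Ici 0) := by
  have : SigmaFinite ((volume : Measure ℝ).map (|·|)) := by
    rw [map_abs_volume_real]
    infer_instance
  have hmap : (volume : Measure (ι → ℝ)).map (|·|) =
      Measure.pi fun _ => (volume : Measure ℝ).map (|·|) :=
    Measure.pi_map_pi (μ := fun _ : ι => volume) (f := fun _ x => |x|) fun _ => by fun_prop
  rw [hmap, map_abs_volume_real]
  refine Measure.pi_eq fun s hs => ?_
  rw [Measure.smul_apply, Measure.restrict_apply (.univ_pi hs), ← pi_univ_Ici, ← pi_inter_distrib,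
    volume_pi_pi]
  simp [Measure.restrict_apply (hs _), ENNReal.smul_def, Finset.prod_mul_distrib]

lemma volume_eq_two_pow_mul_volume_inter_Ici {s : Set (ι → ℝ)} (hs : MeasurableSet s)
    (habs : ∀ x, |x| ∈ s ↔ x ∈ s) :
    volume s = 2 ^ Fintype.card ι * volume (s ∩ Ici 0) := by
  calc volume s = volume.map (fun x => |x|) s := by
        rw [Measure.map_apply (measurable_pi_lambda _ fun i =>
          (measurable_pi_apply i).abs : Measurable fun x : ι → ℝ => |x|) hs]
        congr 1
        ext x
        exact (habs x).symm
    _ = 2 ^ Fintype.card ι * volume (s ∩ Ici 0) := by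
        rw [map_abs_volume_pi, Measure.smul_apply, Measure.restrict_apply hs, ENNReal.smul_def]
        simp

end Orthant

section LatticePoints

variable {ι : Type*}

lemma tendsto_natCast_pi_cofinite_cocompact [Finite ι] :
    Tendsto (fun (m : ι → ℕ) i => (m i : ℝ)) cofinite (cocompact (ι → ℝ)) := by
  rw [← coprodᵢ_cofinite, ← coprodᵢ_cocompact]
  refine Tendsto.pi_map_coprodᵢ fun i => ?_
  rw [Nat.cofinite_eq_atTop]
  exact tendsto_natCast_atTop_atTop.mono_right atTop_le_cocompact

lemma mem_span_int_pi_basisFun_iff [Finite ι] {x : ι → ℝ} :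
    x ∈ (Submodule.span ℤ (range (Pi.basisFun ℝ ι)) : Set (ι → ℝ)) ↔
      ∃ c : ι → ℤ, (fun i => (c i : ℝ)) = x := by
  simp [Module.Basis.mem_span_iff_repr_mem, funext_iff, Classical.skolem]

lemma image_natCast_eq_inter_Ici_span_int [Finite ι] (s : Set (ι → ℝ)) {x : ℝ} (hx : 0 < x) :
    (fun (m : ι → ℕ) => x⁻¹ • fun i => (m i : ℝ)) '' {m | x⁻¹ • (fun i => (m i : ℝ)) ∈ s} =
      (s ∩ Ici 0) ∩ x⁻¹ • (Submodule.span ℤ (range (Pi.basisFun ℝ ι)) : Set (ι → ℝ)) := by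
  ext y
  constructor
  · rintro ⟨m, hm, rfl⟩
    refine ⟨⟨hm, fun i => ?_⟩, smul_mem_smul_set (mem_span_int_pi_basisFun_iff.2
      ⟨fun i => m i, by simp only [Int.cast_natCast]⟩)⟩
    simp only [Pi.zero_apply, Pi.smul_apply, smul_eq_mul]
    positivity
  · rintro ⟨⟨hys, hy0⟩, z, hz, rfl⟩
    obtain ⟨c, rfl⟩ := mem_span_int_pi_basisFun_iff.1 hz
    have hc (i : ι) : 0 ≤ c i := by
      have := hy0 i
      simpa [hx] using this
    lift c to ι → ℕ using hc
    exact ⟨c, by simpa using hys, by simp⟩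

lemma smul_set_subset_smul_set_of_convex {E : Type*} [AddCommGroup E] [Module ℝ E] {s : Set E}
    (hs : Convex ℝ s) (h0 : 0 ∈ s) {x y : ℝ} (hx : 0 < x) (hxy : x ≤ y) : x • s ⊆ y • s := by
  have hy := hx.trans_le hxy
  rw [subset_smul_set_iff₀ hy.ne', smul_smul]
  rintro _ ⟨w, hw, rfl⟩
  exact hs.smul_mem_of_zero_mem h0 hw ⟨by positivity, by rwa [inv_mul_le_one₀ hy]⟩

variable [Fintype ι]

theorem tendsto_ncard_nat_div_pow_atTop_volume {s : Set (ι → ℝ)} (hbdd : Bornology.IsBounded s)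
    (hconv : Convex ℝ s) (hmeas : MeasurableSet s) (h0 : 0 ∈ s) :
    Tendsto (fun x : ℝ =>
        ({m : ι → ℕ | x⁻¹ • (fun i => (m i : ℝ)) ∈ s}.ncard : ℝ) / x ^ Fintype.card ι)
      atTop (𝓝 (volume.real (s ∩ Ici 0))) := by
  have hconv' : Convex ℝ (s ∩ Ici 0) := hconv.inter (convex_Ici 0)
  refine (tendsto_card_div_pow_atTop_volume' _ (hbdd.subset inter_subset_left)
    (hmeas.inter measurableSet_Ici) (hconv'.addHaar_frontier volume)
    fun x y => smul_set_subset_smul_set_of_convex hconv' ⟨h0, self_mem_Ici⟩).congr' ?_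
  filter_upwards [eventually_gt_atTop 0] with x hx
  rw [Nat.card_coe_set_eq, ← image_natCast_eq_inter_Ici_span_int s hx, ncard_image_of_injective]
  intro m m' h
  simpa [funext_iff, hx.ne'] using h

theorem tendsto_ncard_nat_div_pow_atTop_volume_of_abs {s : Set (ι → ℝ)}
    (hbdd : Bornology.IsBounded s) (hconv : Convex ℝ s) (hmeas : MeasurableSet s) (h0 : 0 ∈ s)
    (habs : ∀ x, |x| ∈ s ↔ x ∈ s) :
    Tendsto (fun x : ℝ =>
        ({m : ι → ℕ | x⁻¹ • (fun i => (m i : ℝ)) ∈ s}.ncard : ℝ) / x ^ Fintype.card ι)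
      atTop (𝓝 (volume.real s / 2 ^ Fintype.card ι)) := by
  convert tendsto_ncard_nat_div_pow_atTop_volume hbdd hconv hmeas h0 using 2
  rw [Measure.real, volume_eq_two_pow_mul_volume_inter_Ici hmeas habs]
  simp [Measure.real]

lemma eventually_cofinite_one_le_sum :
    ∀ᶠ m : ι → ℕ in cofinite, 1 ≤ ∑ i, m i := by
  filter_upwards [(finite_singleton (0 : ι → ℕ)).eventually_cofinite_notMem] with m hm
  contrapose! hm
  simpa [funext_iff] using hm

end LatticePoints

section Ellipsoid

variable {ι : Type*}

/-- The linear isomorphism `x ↦ (aᵢ xᵢ)ᵢ` onto Euclidean space. The norm of the image of `x` is the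
Euclidean norm of `x` weighted by `a`, whose unit ball is the ellipsoid with semi-axes `|aᵢ|⁻¹`. -/
noncomputable def axisScaling (a : ι → ℝˣ) : (ι → ℝ) ≃L[ℝ] EuclideanSpace ℝ ι :=
  (ContinuousLinearEquiv.piCongrRight fun i => ContinuousLinearEquiv.unitsEquivAut ℝ (a i)).trans
    (EuclideanSpace.equiv ι ℝ).symm

lemma axisScaling_apply (a : ι → ℝˣ) (x : ι → ℝ) :
    axisScaling a x = WithLp.toLp 2 fun i => x i * a i := rfl

variable [Fintype ι] (a : ι → ℝˣ)

lemma norm_axisScaling (x : ι → ℝ) : ‖axisScaling a x‖ = √(∑ i, (x i * a i) ^ 2) := by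
  simp only [axisScaling_apply, EuclideanSpace.norm_eq, Real.norm_eq_abs, sq_abs]

lemma volume_preimage_axisScaling {s : Set (EuclideanSpace ℝ ι)} (hs : MeasurableSet s) :
    volume.real (axisScaling a ⁻¹' s) = |∏ i, (a i : ℝ)|⁻¹ * volume.real s := by
  classical
  have hpre : axisScaling a ⁻¹' s = Matrix.toLin' (Matrix.diagonal fun i => (a i : ℝ)) ⁻¹'
      (WithLp.toLp 2 ⁻¹' s) := by
    ext x
    simp only [mem_preimage, axisScaling_apply, Matrix.toLin'_apply, mul_comm (x _)]
    congr! 2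
    exact funext fun i => (Matrix.mulVec_diagonal (fun i => (a i : ℝ)) x i).symm
  have hdet : LinearMap.det (Matrix.toLin' (Matrix.diagonal fun i => (a i : ℝ))) =
      ∏ i, (a i : ℝ) := by
    rw [LinearMap.det_toLin', Matrix.det_diagonal]
  have hdet0 : ∏ i, (a i : ℝ) ≠ 0 := Finset.prod_ne_zero_iff.2 fun i _ => (a i).ne_zero
  rw [hpre, Measure.real, Measure.addHaar_preimage_linearMap volume (hdet ▸ hdet0), hdet,
    (PiLp.volume_preserving_toLp ι).measure_preimage hs.nullMeasurableSet]
  simp [Measure.real, abs_inv]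

theorem tendsto_norm_axisScaling_natCast :
    Tendsto (fun m : ι → ℕ => ‖axisScaling a fun i => m i‖) cofinite atTop :=
  tendsto_norm_cocompact_atTop.comp <|
    (axisScaling a).toHomeomorph.isClosedEmbedding.tendsto_cocompact.comp
      tendsto_natCast_pi_cofinite_cocompact

theorem tendsto_ncard_norm_axisScaling_le_div_pow :
    Tendsto (fun x : ℝ =>
        ({m : ι → ℕ | ‖axisScaling a fun i => m i‖ ≤ x}.ncard : ℝ) / x ^ Fintype.card ι) atTop
      (𝓝 (volume.real (Metric.closedBall (0 : EuclideanSpace ℝ ι) 1) /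
        (2 ^ Fintype.card ι * |∏ i, (a i : ℝ)|))) := by
  have hlim := tendsto_ncard_nat_div_pow_atTop_volume_of_abs
    (s := axisScaling a ⁻¹' Metric.closedBall 0 1)
    ((axisScaling a).toHomeomorph.isCompact_preimage.2 (isCompact_closedBall 0 1)).isBounded
    ((convex_closedBall 0 1).linear_preimage (axisScaling a).toLinearMap)
    ((axisScaling a).continuous.measurable measurableSet_closedBall) (by simp)
    fun x => by simp [norm_axisScaling, mul_pow]
  rw [volume_preimage_axisScaling a measurableSet_closedBall] at hlim
  convert hlim.congr' ?_ using 2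
  · field_simp
  · filter_upwards [eventually_gt_atTop 0] with x hx
    simp only [mem_preimage, mem_closedBall_zero_iff, map_smul, norm_smul, norm_inv,
      Real.norm_of_nonneg hx.le, inv_mul_le_one₀ hx]

end Ellipsoid

section Hyperbolic

lemma tendsto_sinh_atTop_atTop : Tendsto Real.sinh atTop atTop :=
  tendsto_atTop_mono' _ ((eventually_ge_atTop 0).mono fun _ => Real.self_le_sinh_iff.2) tendsto_id

lemma tendsto_div_sinh_atTop_zero : Tendsto (fun x => x / Real.sinh x) atTop (𝓝 0) := by
  have hxexp : Tendsto (fun x : ℝ => x * Real.exp (-x)) atTop (𝓝 0) := by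
    simpa only [pow_one] using Real.tendsto_pow_mul_exp_neg_atTop_nhds_zero 1
  have hexp : Tendsto (fun x : ℝ => Real.exp (-x)) atTop (𝓝 0) :=
    Real.tendsto_exp_neg_atTop_nhds_zero
  have hlim := (hxexp.const_mul 2).div ((hexp.pow 2).const_sub 1) (by norm_num)
  rw [mul_zero, zero_pow two_ne_zero, sub_zero, zero_div] at hlim
  refine hlim.congr fun x => ?_
  rw [Pi.div_apply, Real.sinh_eq, Real.exp_neg]
  field_simp

lemma tendsto_cosh_div_sinh_atTop_one :
    Tendsto (fun x => Real.cosh x / Real.sinh x) atTop (𝓝 1) := by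
  have hlim := (Real.tendsto_exp_neg_atTop_nhds_zero.div_atTop tendsto_sinh_atTop_atTop).const_add 1
  rw [add_zero] at hlim
  refine hlim.congr' ?_
  filter_upwards [tendsto_sinh_atTop_atTop.eventually_gt_atTop 0] with x hx
  rw [← Real.cosh_sub_sinh]
  field_simp
  ring

lemma tendsto_sinh_mul_cosh_add_div_sinh_sq_sub_sq :
    Tendsto (fun x => (Real.sinh x * Real.cosh x + x) / (Real.sinh x ^ 2 - x ^ 2)) atTop
      (𝓝 1) := by
  have hlim := (tendsto_cosh_div_sinh_atTop_one.add
    (tendsto_div_sinh_atTop_zero.div_atTop tendsto_sinh_atTop_atTop)).div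
    ((tendsto_div_sinh_atTop_zero.pow 2).const_sub 1) (by norm_num)
  rw [add_zero, zero_pow two_ne_zero, sub_zero, div_one] at hlim
  refine hlim.congr' ?_
  filter_upwards [tendsto_sinh_atTop_atTop.eventually_gt_atTop 0] with x hx
  rw [Pi.div_apply]
  field_simp

end Hyperbolic

section Box

variable {k : ℕ} {l : Fin (k + 1) → ℝ}

lemma tendsto_steklovCubed_div_pow_three {L : ℝ} (hL : 0 < L) (ϱ : ℝ) :
    Tendsto (fun b => steklovCubed b L ϱ / b ^ 3) atTop (𝓝 (2 / ϱ ^ 3)) := by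
  have hlim := (tendsto_sinh_mul_cosh_add_div_sinh_sq_sub_sq.comp
    (tendsto_id.atTop_mul_const hL)).const_mul (2 / ϱ ^ 3)
  rw [mul_one] at hlim
  refine hlim.congr' ?_
  filter_upwards [eventually_gt_atTop 0] with b hb
  simp only [steklovCubed, Function.comp_apply, id, mul_pow]
  field_simp

/-- The lowest frequencies `π / lᵢ` of the box along its horizontal edges, as units of `ℝ` so that
they can serve as weights of `axisScaling`. -/
noncomputable def boxFrequency (hl : ∀ i : Fin k, 0 < l i.castSucc) (i : Fin k) : ℝˣ :=
  Units.mk0 (Real.pi / l i.castSucc) (div_pos Real.pi_pos (hl i)).ne'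

lemma beta_eq_norm_axisScaling (hl : ∀ i : Fin k, 0 < l i.castSucc) (m : Fin k → ℕ) :
    beta l m = ‖axisScaling (boxFrequency hl) fun i => m i‖ := by
  simp only [beta, boxFrequency, norm_axisScaling, Units.val_mk0, mul_div_assoc]

lemma tendsto_beta_cofinite_atTop (hl : ∀ i : Fin k, 0 < l i.castSucc) :
    Tendsto (beta l) cofinite atTop := by
  simpa only [← beta_eq_norm_axisScaling hl] using
    tendsto_norm_axisScaling_natCast (boxFrequency hl)

lemma tendsto_ncard_beta_le_div_pow (hl : ∀ i : Fin k, 0 < l i.castSucc) :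
    Tendsto (fun x : ℝ => ({m : Fin k → ℕ | beta l m ≤ x}.ncard : ℝ) / x ^ k) atTop
      (𝓝 (volume.real (Metric.closedBall (0 : EuclideanSpace ℝ (Fin k)) 1) *
        (∏ i : Fin k, l i.castSucc) / (2 * Real.pi) ^ k)) := by
  have hlim := tendsto_ncard_norm_axisScaling_le_div_pow (boxFrequency hl)
  have hprod : |∏ i, (boxFrequency hl i : ℝ)| = Real.pi ^ k / ∏ i : Fin k, l i.castSucc := by
    simp only [boxFrequency, Units.val_mk0]
    rw [abs_of_pos (Finset.prod_pos fun i _ => div_pos Real.pi_pos (hl i))]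
    simp
  simp only [← beta_eq_norm_axisScaling hl, Fintype.card_fin, hprod] at hlim
  convert hlim using 2
  rw [mul_pow]
  field_simp

end Box

lemma inv_two_mul_div_rpow_pow_three (ϱ : ℝ) :
    ((2 * ϱ / (16 : ℝ) ^ ((1 : ℝ) / 3)) ^ 3)⁻¹ = 2 / ϱ ^ 3 := by
  have h16 : ((16 : ℝ) ^ ((1 : ℝ) / 3)) ^ 3 = 16 := by
    rw [one_div]
    exact_mod_cast Real.rpow_inv_natCast_pow (show (0 : ℝ) ≤ 16 by norm_num) three_ne_zero
  rw [div_pow, h16]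
  field_simp
  norm_num

theorem box_counting_function_asymptotics_free_general
    (k : ℕ) (hk : 1 ≤ k) (l : Fin (k + 1) → ℝ) (hl : ∀ i, 0 < l i) (ϱ : ℝ) (hϱ : 0 < ϱ) :
    Tendsto (fun τ : ℝ =>
        (Set.ncard {m : Fin k → ℕ |
            1 ≤ ∑ i, m i ∧
            steklovCubed (beta l m) (l (Fin.last k)) ϱ ≤ τ ^ 3} : ℝ) / τ ^ k)
      atTop
      (nhds ((MeasureTheory.volume
          (Metric.ball (0 : EuclideanSpace ℝ (Fin k)) 1)).toReal *
        (((16 : ℝ) ^ ((1 : ℝ) / 3) * Real.pi)⁻¹) ^ k *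
        (∏ i : Fin k, l i.castSucc) * ϱ ^ k)) := by
  have hβ := tendsto_beta_cofinite_atTop fun i : Fin k => hl i.castSucc
  have hratio := (tendsto_steklovCubed_div_pow_three (hl (Fin.last k)) ϱ).comp hβ
  rw [← inv_two_mul_div_rpow_pow_three] at hratio
  have hlim := tendsto_ncard_le_pow_div_pow_of_tendsto_div_pow (by lia) three_ne_zero
    (by positivity) eventually_cofinite_one_le_sum hβ
    (tendsto_ncard_beta_le_div_pow fun i => hl i.castSucc) hratio
  have : NeZero k := ⟨by lia⟩
  rw [Measure.real, Measure.addHaar_closedBall_eq_addHaar_ball volume 0 1] at hlim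
  convert hlim using 2
  simp only [mul_pow, div_pow, inv_pow]
  field_simp

/-- Weyl-type asymptotics of the counting function `A^f(τ)` of the biharmonic
Steklov eigenvalues of the box `[0,l₁]×⋯×[0,l_{k+1}]` (free lateral boundary
conditions, nonnegative-integer tuples `m` not all zero):
`A^f(τ)/τ^k → ω_k (16^{1/3}π)^{−k} l₁⋯l_k ϱ^k` as `τ → ∞` (here `k = n − 1 ≥ 1`). -/
theorem box_counting_function_asymptotics_free
    (k : ℕ) (hk : 1 ≤ k) (l : Fin (k + 1) → ℝ) (hl : ∀ i, 0 < l i)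
    (hln : ∀ i : Fin k, l i.castSucc < l (Fin.last k))
    (ϱ : ℝ) (hϱ : 0 < ϱ) :
    Tendsto (fun τ : ℝ =>
        (Set.ncard {m : Fin k → ℕ |
            1 ≤ ∑ i, m i ∧
            steklovCubed (beta l m) (l (Fin.last k)) ϱ ≤ τ ^ 3} : ℝ) / τ ^ k)
      atTop
      (nhds ((MeasureTheory.volume
          (Metric.ball (0 : EuclideanSpace ℝ (Fin k)) 1)).toReal *
        (((16 : ℝ) ^ ((1 : ℝ) / 3) * Real.pi)⁻¹) ^ k *
        (∏ i : Fin k, l i.castSucc) * ϱ ^ k)) :=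
  box_counting_function_asymptotics_free_general k hk l hl ϱ hϱ
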